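/- Under the decoy-state assumptions, the single-photon gain of the signal states satisfies Q₁ := μ·e^{-μ}·Y(1) ≥ μ·e^{-μ}·Y₁^L, where Y₁^L = μ/(μ(ν₁ − ν₂) − (ν₁² − ν₂²)) · [ Q(ν₁)·e^{ν₁} − Q(ν₂)·e^{ν₂} − ((ν₁² − ν₂²)/μ²)·(Q(μ)·e^{μ} − Y₀^L) ] and Y₀^L = max{ (ν₁·Q(ν₂)·e^{ν₂} − ν₂·Q(ν₁)·e^{ν₁}) / (ν₁ − ν₂), 0 }. -/

import Mathlib

/-- The gain for intensity `m` with yields `Y`: Poisson average of the yields. -/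
noncomputable def decoyGain (Y : ℕ → ℝ) (m : ℝ) : ℝ :=
  ∑' i : ℕ, Real.exp (-m) * m ^ i / (Nat.factorial i) * Y i


lemma decoy_summable (Y : ℕ → ℝ) (hY : ∀ i, 0 ≤ Y i ∧ Y i ≤ 1) (m : ℝ) (hm : 0 ≤ m) :
    Summable (fun i : ℕ => m ^ i / (Nat.factorial i) * Y i) := by
  refine Summable.of_nonneg_of_le (fun i => ?_) (fun i => ?_) (Real.summable_pow_div_factorial m)
  · have := (hY i).1
    positivity
  · exact mul_le_of_le_one_right (by positivity) (hY i).2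

lemma decoy_split (Y : ℕ → ℝ) (hY : ∀ i, 0 ≤ Y i ∧ Y i ≤ 1) (m : ℝ) (hm : 0 ≤ m) :
    decoyGain Y m * Real.exp m
      = Y 0 + m * Y 1 + ∑' i : ℕ, m ^ (i + 2) / (Nat.factorial (i + 2)) * Y (i + 2) := by
  have h := (decoy_summable Y hY m hm).sum_add_tsum_nat_add 2
  simp only [Finset.sum_range_succ, Finset.sum_range_zero] at h
  have h2 : decoyGain Y m * Real.exp m = ∑' i : ℕ, m ^ i / (Nat.factorial i) * Y i := by
    unfold decoyGain
    rw [← tsum_mul_right]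
    refine tsum_congr fun i => ?_
    have : Real.exp (-m) * Real.exp m = 1 := by rw [← Real.exp_add]; simp
    linear_combination (m ^ i / (Nat.factorial i) * Y i) * this
  rw [h2, ← h]
  simp

lemma decoy_pow (a b μ : ℝ) (hb : 0 ≤ b) (hab : b < a) (hμ : a + b < μ) (i : ℕ) :
    a ^ (i + 2) - b ^ (i + 2) ≤ (a ^ 2 - b ^ 2) * μ ^ i := by
  induction i with
  | zero => simp
  | succ k ih =>
    have h1 : b ^ (k + 1) ≤ a ^ (k + 1) := pow_le_pow_left₀ hb hab.le _
    have h2 : b ^ (k + 2) ≤ a ^ (k + 2) := pow_le_pow_left₀ hb hab.le _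
    have h3 : 0 ≤ a * b * (a ^ (k + 1) - b ^ (k + 1)) :=
      mul_nonneg (mul_nonneg (by linarith) hb) (by linarith)
    have h4 := mul_le_mul_of_nonneg_left ih (show 0 ≤ μ by linarith)
    have h5 : 0 ≤ (μ - (a + b)) * (a ^ (k + 2) - b ^ (k + 2)) :=
      mul_nonneg (by linarith) (by linarith)
    ring_nf at *
    linarith

theorem single_photon_gain_lower_bound (Y : ℕ → ℝ) (hY : ∀ i, 0 ≤ Y i ∧ Y i ≤ 1)
    (μ ν₁ ν₂ : ℝ) (hν₂ : 0 ≤ ν₂) (hν : ν₂ < ν₁) (hμ : ν₁ + ν₂ < μ) :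
    μ * Real.exp (-μ) * Y 1 ≥
      μ * Real.exp (-μ) *
        (μ / (μ * (ν₁ - ν₂) - (ν₁ ^ 2 - ν₂ ^ 2)) *
          (decoyGain Y ν₁ * Real.exp ν₁ - decoyGain Y ν₂ * Real.exp ν₂
            - (ν₁ ^ 2 - ν₂ ^ 2) / μ ^ 2 *
              (decoyGain Y μ * Real.exp μ
                - max ((ν₁ * decoyGain Y ν₂ * Real.exp ν₂ - ν₂ * decoyGain Y ν₁ * Real.exp ν₁)
                        / (ν₁ - ν₂)) 0))) := by
  have ha : 0 < ν₁ := by linarith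
  have hm : 0 < μ := by linarith
  have e1 := decoy_split Y hY ν₁ ha.le
  have e2 := decoy_split Y hY ν₂ hν₂
  have e3 := decoy_split Y hY μ hm.le
  have s1 := (summable_nat_add_iff 2).2 (decoy_summable Y hY ν₁ ha.le)
  have s2 := (summable_nat_add_iff 2).2 (decoy_summable Y hY ν₂ hν₂)
  have s3 := (summable_nat_add_iff 2).2 (decoy_summable Y hY μ hm.le)
  have k1 : (∑' i : ℕ, ν₁ ^ (i + 2) / (Nat.factorial (i + 2)) * Y (i + 2))
      - (∑' i : ℕ, ν₂ ^ (i + 2) / (Nat.factorial (i + 2)) * Y (i + 2))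
      ≤ (ν₁ ^ 2 - ν₂ ^ 2) / μ ^ 2 *
        ∑' i : ℕ, μ ^ (i + 2) / (Nat.factorial (i + 2)) * Y (i + 2) := by
    rw [← s1.tsum_sub s2, ← tsum_mul_left]
    refine (s1.sub s2).tsum_le_tsum (fun i => ?_) (s3.mul_left _)
    have h := decoy_pow ν₁ ν₂ μ hν₂ hν hμ i
    have hy := (hY (i + 2)).1
    have h' := mul_le_mul_of_nonneg_right h
      (show 0 ≤ Y (i + 2) / (Nat.factorial (i + 2) : ℝ) by positivity)
    have hr : (ν₁ ^ 2 - ν₂ ^ 2) / μ ^ 2 * (μ ^ (i + 2) / (Nat.factorial (i + 2)) * Y (i + 2))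
      = (ν₁ ^ 2 - ν₂ ^ 2) * μ ^ i * (Y (i + 2) / (Nat.factorial (i + 2) : ℝ)) := by
      rw [pow_add]; field_simp
    rw [hr]
    refine le_trans (le_of_eq ?_) h'
    ring
  have k2 : ν₁ * (∑' i : ℕ, ν₂ ^ (i + 2) / (Nat.factorial (i + 2)) * Y (i + 2))
      ≤ ν₂ * (∑' i : ℕ, ν₁ ^ (i + 2) / (Nat.factorial (i + 2)) * Y (i + 2)) := by
    rw [← tsum_mul_left, ← tsum_mul_left]
    refine (s2.mul_left _).tsum_le_tsum (fun i => ?_) (s1.mul_left _)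
    have hy := (hY (i + 2)).1
    have h : ν₂ ^ (i + 1) ≤ ν₁ ^ (i + 1) := pow_le_pow_left₀ hν₂ hν.le _
    have h' := mul_le_mul_of_nonneg_right h
      (show 0 ≤ ν₁ * ν₂ * (Y (i + 2) / (Nat.factorial (i + 2) : ℝ)) by positivity)
    refine le_trans (le_of_eq ?_) (h'.trans (le_of_eq ?_)) <;> ring
  rw [mul_assoc ν₁, mul_assoc ν₂, e1, e2, e3]
  generalize (∑' i : ℕ, ν₁ ^ (i + 2) / (Nat.factorial (i + 2)) * Y (i + 2)) = T1 at *
  generalize (∑' i : ℕ, ν₂ ^ (i + 2) / (Nat.factorial (i + 2)) * Y (i + 2)) = T2 at *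
  generalize (∑' i : ℕ, μ ^ (i + 2) / (Nat.factorial (i + 2)) * Y (i + 2)) = T3 at *
  have hd : 0 < ν₁ - ν₂ := by linarith
  have k3 : max ((ν₁ * (Y 0 + ν₂ * Y 1 + T2) - ν₂ * (Y 0 + ν₁ * Y 1 + T1)) / (ν₁ - ν₂)) 0
      ≤ Y 0 := by
    refine max_le ?_ (hY 0).1
    rw [div_le_iff₀ hd]
    linarith
  generalize max ((ν₁ * (Y 0 + ν₂ * Y 1 + T2) - ν₂ * (Y 0 + ν₁ * Y 1 + T1)) / (ν₁ - ν₂)) 0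
    = L at *
  have hc : 0 ≤ (ν₁ ^ 2 - ν₂ ^ 2) / μ ^ 2 := by
    apply div_nonneg _ (by positivity)
    nlinarith
  have hD : 0 < μ * (ν₁ - ν₂) - (ν₁ ^ 2 - ν₂ ^ 2) := by
    have := mul_pos hd (show 0 < μ - (ν₁ + ν₂) by linarith)
    linarith
  have hcm : (ν₁ ^ 2 - ν₂ ^ 2) / μ ^ 2 * μ ^ 2 = ν₁ ^ 2 - ν₂ ^ 2 := by field_simp
  generalize (ν₁ ^ 2 - ν₂ ^ 2) / μ ^ 2 = c at *
  apply mul_le_mul_of_nonneg_left _ (by positivity)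
  rw [div_mul_eq_mul_div, div_le_iff₀ hD, ← hcm]
  have k4 := mul_le_mul_of_nonneg_left k3 hc
  have k5 : (Y 0 + ν₁ * Y 1 + T1) - (Y 0 + ν₂ * Y 1 + T2) - c * ((Y 0 + μ * Y 1 + T3) - L)
      ≤ Y 1 * ((ν₁ - ν₂) - c * μ) := by
    linarith
  have k6 := mul_le_mul_of_nonneg_left k5 hm.le
  linarith
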